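/- For every ε > 0 there exists N such that for all even n ≥ N, 2 · f_62(n/2) · f_63(n/2) ≤ 0.981 · (1 + ε) · C(n/2, 31)², where C(n, k) denotes the binomial coefficient. -/

import Mathlib

/-- A complete `r`-partite `r`-graph (a "block") on a finite vertex set `V ⊆ ℕ`:
it is determined by `r` pairwise disjoint nonempty subsets of `V`. -/
structure Block (V : Finset ℕ) (r : ℕ) where
  parts : Fin r → Finset ℕ
  nonempty : ∀ i, (parts i).Nonempty
  subset : ∀ i, parts i ⊆ V
  disj : ∀ i j, i ≠ j → Disjoint (parts i) (parts j)

/-- The edge set of a block: all sets contained in the union of the parts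
meeting each part in exactly one vertex. -/
def Block.edges {V : Finset ℕ} {r : ℕ} (B : Block V r) : Set (Finset ℕ) :=
  {X | (∀ i, (X ∩ B.parts i).card = 1) ∧ ∀ x ∈ X, ∃ i, x ∈ B.parts i}

/-- `ExactCover V r k F` : there are `k` complete `r`-partite `r`-graphs on `V`
whose edge sets are pairwise disjoint and whose union is the family `F`. -/
def ExactCover (V : Finset ℕ) (r k : ℕ) (F : Set (Finset ℕ)) : Prop :=
  ∃ B : Fin k → Block V r,
    (∀ i j, i ≠ j → Disjoint (B i).edges (B j).edges) ∧
    (⋃ i, (B i).edges) = F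

/-- `f r n` : the minimum number of complete `r`-partite `r`-graphs needed to
partition the edge set of the complete `r`-uniform hypergraph on `[n]`. -/
noncomputable def f (r n : ℕ) : ℕ :=
  sInf {k | ExactCover (Finset.range n) r k
    {X | X ⊆ Finset.range n ∧ X.card = r}}

/-! The pairs `(e, e')` of an edge of `K₄` and an edge of `K₆` can be partitioned into `14` products
of bicliques, one fewer than the `3 * 5 = 15` products coming from the Graham–Pollak partitions of
the two factors. Substituting vertices recursively, the pairs of edges of two disjoint complete
graphs on `T` vertices are partitioned into about `(14 / 15) * T ^ 2` products. Split the vertex set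
into `L` classes of size about `T = n / L` and sort the `2 * k`-sets by the numbers of vertices they
have in each class. A pattern with an odd entry costs at most `T ^ (k - 1)` blocks, and for large
`L` almost all patterns with even entries consist of `k` twos; pairing these up, such a pattern
costs about `(14 / 15) ^ (k / 2) * T ^ k` blocks. Hence `f (2 * k) n` is asymptotically at most
`(14 / 15) ^ (k / 2) * n.choose k`, whereas `f (2 * k + 1) n ≤ n.choose k` by fixing the vertices in
even position. Finally `2 * (14 / 15) ^ 15 < 0.981`. -/

namespace GrahamPollak

open Finset Function
open scoped SetFamily

section BoxPartition

variable {α : Type*} [DecidableEq α]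

/-- The edge set of the complete multipartite hypergraph with parts `P i`. It is empty as soon as
some part is. -/
def boxEdges {ι : Type*} (P : ι → Finset α) : Set (Finset α) :=
  {X | (∀ i, #(X ∩ P i) = 1) ∧ ∀ x ∈ X, ∃ i, x ∈ P i}

/-- `E` is the edge set of a complete `r`-partite `r`-graph. Unlike in `Block`, parts may be
empty. -/
def IsBox (r : ℕ) (E : Set (Finset α)) : Prop :=
  ∃ P : Fin r → Finset α, Pairwise (Disjoint on P) ∧ boxEdges P = E

/-- The family `F` can be partitioned into at most `k` edge sets of complete `r`-partite
`r`-graphs. -/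
def BoxPartition (r k : ℕ) (F : Set (Finset α)) : Prop :=
  ∃ (κ : Type) (_ : Fintype κ) (E : κ → Set (Finset α)), Fintype.card κ ≤ k ∧
    (∀ a, IsBox r (E a)) ∧ (∀ a, E a ⊆ F) ∧ ∀ X ∈ F, ∃! a, X ∈ E a

lemma boxEdges_comp_equiv {ι κ : Type*} (e : ι ≃ κ) (P : κ → Finset α) :
    boxEdges (P ∘ e) = boxEdges P := by
  ext X
  simp only [boxEdges, Set.mem_ofPred_eq, comp_apply, e.surjective.forall, e.surjective.exists]

lemma boxEdges_inter_right {ι : Type*} (P : ι → Finset α) (A : Finset α) :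
    boxEdges (fun i => P i ∩ A) = boxEdges P ∩ Set.Iic A := by
  ext X
  have inter_eq (hXA : X ⊆ A) (i : ι) : X ∩ (P i ∩ A) = X ∩ P i := by
    rw [inter_comm (P i), ← inter_assoc, inter_eq_left.2 hXA]
  constructor
  · rintro ⟨hcard, hcover⟩
    have hXA : X ⊆ A := fun x hx => (mem_inter.1 (hcover x hx).choose_spec).2
    refine ⟨⟨fun i => inter_eq hXA i ▸ hcard i, fun x hx => ?_⟩, hXA⟩
    exact (hcover x hx).imp fun i hi => (mem_inter.1 hi).1
  · rintro ⟨⟨hcard, hcover⟩, hXA⟩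
    refine ⟨fun i => (inter_eq hXA i).symm ▸ hcard i, fun x hx => ?_⟩
    exact (hcover x hx).imp fun i hi => mem_inter.2 ⟨hi, hXA hx⟩

lemma eq_of_union_eq {A B X X' Y Y' : Finset α} (hAB : Disjoint A B) (hX : X ⊆ A)
    (hX' : X' ⊆ A) (hY : Y ⊆ B) (hY' : Y' ⊆ B) (h : X ∪ Y = X' ∪ Y') : X = X' ∧ Y = Y' := by
  have inter_left {U V : Finset α} (hU : U ⊆ A) (hV : V ⊆ B) : (U ∪ V) ∩ A = U := by
    rw [union_inter_distrib_right, inter_eq_left.2 hU,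
      disjoint_iff_inter_eq_empty.1 (hAB.symm.mono_left hV), union_empty]
  have inter_right {U V : Finset α} (hU : U ⊆ A) (hV : V ⊆ B) : (U ∪ V) ∩ B = V := by
    rw [union_inter_distrib_right, inter_eq_left.2 hV,
      disjoint_iff_inter_eq_empty.1 (hAB.mono_left hU), empty_union]
  exact ⟨by rw [← inter_left hX hY, h, inter_left hX' hY'],
    by rw [← inter_right hX hY, h, inter_right hX' hY']⟩

lemma boxEdges_sumElim {ι κ : Type*} {A B : Finset α} {P : ι → Finset α} {Q : κ → Finset α}
    (hP : ∀ i, P i ⊆ A) (hQ : ∀ j, Q j ⊆ B) (hAB : Disjoint A B) :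
    boxEdges (Sum.elim P Q) = boxEdges P ⊻ boxEdges Q := by
  ext X
  simp only [Set.mem_sups, sup_eq_union]
  have inter_A (i : ι) : A ∩ P i = P i := inter_eq_right.2 (hP i)
  have inter_B (j : κ) : B ∩ Q j = Q j := inter_eq_right.2 (hQ j)
  constructor
  · rintro ⟨hcard, hcover⟩
    simp only [Sum.forall, Sum.elim_inl, Sum.elim_inr] at hcard
    simp only [Sum.exists, Sum.elim_inl, Sum.elim_inr] at hcover
    refine ⟨X ∩ A, ⟨fun i => ?_, fun x hx => ?_⟩, X ∩ B, ⟨fun j => ?_, fun x hx => ?_⟩, ?_⟩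
    · rw [inter_assoc, inter_A, hcard.1]
    · rw [mem_inter] at hx
      exact (hcover x hx.1).resolve_right fun ⟨j, hj⟩ => disjoint_left.1 hAB hx.2 (hQ j hj)
    · rw [inter_assoc, inter_B, hcard.2]
    · rw [mem_inter] at hx
      exact (hcover x hx.1).resolve_left fun ⟨i, hi⟩ => disjoint_left.1 hAB (hP i hi) hx.2
    · rw [← inter_union_distrib_left, inter_eq_left]
      exact fun x hx => mem_union.2
        ((hcover x hx).imp (fun ⟨i, hi⟩ => hP i hi) fun ⟨j, hj⟩ => hQ j hj)
  · rintro ⟨Y, ⟨hYcard, hYcover⟩, Z, ⟨hZcard, hZcover⟩, rfl⟩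
    have hYA : Y ⊆ A := fun y hy => (hYcover y hy).elim fun i hi => hP i hi
    have hZB : Z ⊆ B := fun z hz => (hZcover z hz).elim fun j hj => hQ j hj
    refine ⟨Sum.forall.2 ⟨fun i => ?_, fun j => ?_⟩, fun x hx => Sum.exists.2 ?_⟩
    · rw [Sum.elim_inl, union_inter_distrib_right,
        disjoint_iff_inter_eq_empty.1 (hAB.symm.mono hZB (hP i)), union_empty, hYcard]
    · rw [Sum.elim_inr, union_inter_distrib_right,
        disjoint_iff_inter_eq_empty.1 (hAB.mono hYA (hQ j)), empty_union, hZcard]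
    · exact (mem_union.1 hx).imp (hYcover x) (hZcover x)

lemma IsBox.sups {A B : Finset α} {r s : ℕ} {E E' : Set (Finset α)} (hE : IsBox r E)
    (hE' : IsBox s E') (hEA : E ⊆ Set.Iic A) (hEB : E' ⊆ Set.Iic B) (hAB : Disjoint A B) :
    IsBox (r + s) (E ⊻ E') := by
  obtain ⟨P, hP, rfl⟩ := hE
  obtain ⟨Q, hQ, rfl⟩ := hE'
  let R : Fin r ⊕ Fin s → Finset α := Sum.elim (fun i => P i ∩ A) (fun j => Q j ∩ B)
  have hR : Pairwise (Disjoint on R) := by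
    rintro (i | i) (j | j) hij
    · exact (hP (ne_of_apply_ne _ hij)).mono inter_subset_left inter_subset_left
    · exact hAB.mono inter_subset_right inter_subset_right
    · exact hAB.symm.mono inter_subset_right inter_subset_right
    · exact (hQ (ne_of_apply_ne _ hij)).mono inter_subset_left inter_subset_left
  refine ⟨R ∘ finSumFinEquiv.symm, hR.comp_of_injective finSumFinEquiv.symm.injective, ?_⟩
  rw [boxEdges_comp_equiv, boxEdges_sumElim (fun i => inter_subset_right)
    (fun j => inter_subset_right) hAB, boxEdges_inter_right, boxEdges_inter_right,
    Set.inter_eq_left.2 hEA, Set.inter_eq_left.2 hEB]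

lemma isBox_zero : IsBox 0 ({∅} : Set (Finset α)) := by
  refine ⟨Fin.elim0, fun i => i.elim0, ?_⟩
  ext X
  simp [boxEdges, eq_empty_iff_forall_notMem]

lemma isBox_one (A : Finset α) : IsBox 1 (A.powersetCard 1 : Set (Finset α)) := by
  refine ⟨fun _ => A, Subsingleton.pairwise, ?_⟩
  ext X
  simp only [boxEdges, Set.mem_ofPred_eq, forall_const, exists_const, mem_coe, mem_powersetCard]
  rw [and_comm]
  exact and_congr_right fun hXA => by rw [inter_eq_left.2 hXA]

lemma BoxPartition.mono {r k m : ℕ} {F : Set (Finset α)} (hF : BoxPartition r k F)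
    (hkm : k ≤ m) : BoxPartition r m F :=
  let ⟨κ, hκ, E, hk, hE⟩ := hF
  ⟨κ, hκ, E, hk.trans hkm, hE⟩

lemma boxPartition_empty (r : ℕ) : BoxPartition r 0 (∅ : Set (Finset α)) :=
  ⟨Empty, inferInstance, Empty.elim, by simp⟩

lemma IsBox.boxPartition {r : ℕ} {E : Set (Finset α)} (hE : IsBox r E) : BoxPartition r 1 E :=
  ⟨Unit, inferInstance, fun _ => E, by simp [hE]⟩

lemma BoxPartition.iUnion {ι : Type} [Fintype ι] {r : ℕ} {k : ι → ℕ} {F : Set (Finset α)}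
    {G : ι → Set (Finset α)} (hG : ∀ i, BoxPartition r (k i) (G i)) (hGF : ∀ i, G i ⊆ F)
    (hF : ∀ X ∈ F, ∃! i, X ∈ G i) : BoxPartition r (∑ i, k i) F := by
  choose κ _ E hk hbox hsub hunique using hG
  refine ⟨Σ i, κ i, inferInstance, fun a => E a.1 a.2, ?_, fun a => hbox a.1 a.2,
    fun a => (hsub a.1 a.2).trans (hGF a.1), fun X hX => ?_⟩
  · rw [Fintype.card_sigma]
    exact sum_le_sum fun i _ => hk i
  · obtain ⟨i, hi, hi_unique⟩ := hF X hX
    obtain ⟨a, ha, ha_unique⟩ := hunique i X hi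
    refine ⟨⟨i, a⟩, ha, ?_⟩
    rintro ⟨j, b⟩ hb
    obtain rfl := hi_unique j (hsub j b hb)
    rw [ha_unique b hb]

lemma BoxPartition.union {r k m : ℕ} {F G : Set (Finset α)} (hF : BoxPartition r k F)
    (hG : BoxPartition r m G) (hFG : Disjoint F G) : BoxPartition r (k + m) (F ∪ G) := by
  have := BoxPartition.iUnion (k := fun b => cond b k m) (G := fun b => cond b F G) (F := F ∪ G)
    (Bool.forall_bool.2 ⟨hG, hF⟩)
    (Bool.forall_bool.2 ⟨Set.subset_union_right, Set.subset_union_left⟩) fun X hX => ?_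
  · simpa using this
  · rcases hX with hX | hX
    · exact ⟨true, hX, Bool.forall_bool.2 ⟨fun h => (Set.disjoint_left.1 hFG hX h).elim, by simp⟩⟩
    · exact ⟨false, hX, Bool.forall_bool.2 ⟨by simp, fun h => (Set.disjoint_left.1 hFG h hX).elim⟩⟩

lemma boxPartition_sups {κ : Type} [Fintype κ] {A B : Finset α} {r s : ℕ}
    {F G : Set (Finset α)} {E E' : κ → Set (Finset α)} (hE : ∀ a, IsBox r (E a))
    (hE' : ∀ a, IsBox s (E' a)) (hEF : ∀ a, E a ⊆ F) (hEG : ∀ a, E' a ⊆ G)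
    (hFA : F ⊆ Set.Iic A) (hGB : G ⊆ Set.Iic B) (hAB : Disjoint A B)
    (hunique : ∀ Y ∈ F, ∀ Z ∈ G, ∃! a, Y ∈ E a ∧ Z ∈ E' a) :
    BoxPartition (r + s) (Fintype.card κ) (F ⊻ G) := by
  refine ⟨κ, inferInstance, fun a => E a ⊻ E' a, le_rfl,
    fun a => (hE a).sups (hE' a) ((hEF a).trans hFA) ((hEG a).trans hGB) hAB,
    fun a => Set.sups_subset (hEF a) (hEG a), ?_⟩
  rintro _ ⟨Y, hY, Z, hZ, rfl⟩
  refine (existsUnique_congr fun a => ?_).1 (hunique Y hY Z hZ)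
  refine ⟨fun h => Set.sup_mem_sups h.1 h.2, ?_⟩
  rintro ⟨Y', hY', Z', hZ', h⟩
  obtain ⟨rfl, rfl⟩ := eq_of_union_eq hAB (hFA (hEF a hY')) (hFA hY) (hGB (hEG a hZ')) (hGB hZ) h
  exact ⟨hY', hZ'⟩

lemma BoxPartition.sups {A B : Finset α} {r s k m : ℕ} {F G : Set (Finset α)}
    (hF : BoxPartition r k F) (hG : BoxPartition s m G) (hFA : F ⊆ Set.Iic A)
    (hGB : G ⊆ Set.Iic B) (hAB : Disjoint A B) : BoxPartition (r + s) (k * m) (F ⊻ G) := by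
  obtain ⟨κ, _, E, hk, hE, hEF, hF⟩ := hF
  obtain ⟨κ', _, E', hm, hE', hEG, hG⟩ := hG
  refine (boxPartition_sups (κ := κ × κ') (fun a => hE a.1) (fun a => hE' a.2)
    (fun a => hEF a.1) (fun a => hEG a.2) hFA hGB hAB fun Y hY Z hZ => ?_).mono ?_
  · obtain ⟨a, ha, ha_unique⟩ := hF Y hY
    obtain ⟨b, hb, hb_unique⟩ := hG Z hZ
    exact ⟨(a, b), ⟨ha, hb⟩, fun c hc => Prod.ext (ha_unique _ hc.1) (hb_unique _ hc.2)⟩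
  · rw [Fintype.card_prod]
    exact Nat.mul_le_mul hk hm

end BoxPartition

section ChooseBound

lemma IsBox.exists_block {V : Finset ℕ} {r : ℕ} {E : Set (Finset ℕ)} (hE : IsBox r E)
    (hEV : E ⊆ Set.Iic V) (hne : E.Nonempty) : ∃ B : Block V r, B.edges = E := by
  obtain ⟨P, hP, rfl⟩ := hE
  refine ⟨⟨fun i => P i ∩ V, fun i => ?_, fun i => inter_subset_right,
    fun i j hij => (hP hij).mono inter_subset_left inter_subset_left⟩, ?_⟩
  · obtain ⟨X, hX⟩ := hne
    have hXi : (X ∩ P i).Nonempty := card_pos.1 (by rw [hX.1 i]; exact one_pos)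
    exact hXi.mono fun x hx => mem_inter.2 ⟨(mem_inter.1 hx).2, hEV hX (mem_inter.1 hx).1⟩
  · exact (boxEdges_inter_right P V).trans (Set.inter_eq_left.2 hEV)

lemma f_le_of_boxPartition {r n k : ℕ}
    (h : BoxPartition r k ((range n).powersetCard r : Set (Finset ℕ))) : f r n ≤ k := by
  obtain ⟨κ, _, E, hk, hE, hsub, hunique⟩ := h
  have hEV (a : κ) : E a ⊆ Set.Iic (range n) := fun X hX => (mem_powersetCard.1 (hsub a hX)).1
  classical
  let κ' : Type := {a // (E a).Nonempty}
  choose B hB using fun a : κ' => (hE a).exists_block (hEV a) a.2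
  let e : Fin (Fintype.card κ') ≃ κ' := (Fintype.equivFin κ').symm
  refine le_trans (Nat.sInf_le ?_) ((Fintype.card_subtype_le fun a => (E a).Nonempty).trans hk)
  refine ⟨B ∘ e, fun i j hij => ?_, ?_⟩
  · simp only [comp_apply, hB]
    refine Set.disjoint_left.2 fun X hXi hXj => hij (e.injective (Subtype.ext ?_))
    exact (hunique X (hsub _ hXi)).unique hXi hXj
  · ext X
    simp only [comp_apply, hB, Set.mem_iUnion, Set.mem_ofPred_eq, ← mem_powersetCard]
    refine ⟨fun ⟨i, hi⟩ => hsub _ hi, fun hX => ?_⟩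
    obtain ⟨a, ha, -⟩ := hunique X hX
    exact ⟨e.symm ⟨a, X, ha⟩, by rwa [e.apply_symm_apply]⟩

variable {α : Type*} [DecidableEq α]

omit [DecidableEq α] in
lemma powersetCard_subset_Iic (A : Finset α) (r : ℕ) :
    (A.powersetCard r : Set (Finset α)) ⊆ Set.Iic A :=
  fun _ hX => (mem_powersetCard.1 hX).1

/-- The `r`-subsets of `A ∪ B` having at most one vertex in `B`. -/
def atMostOneIn (A B : Finset α) (r : ℕ) : Set (Finset α) :=
  {X | X ⊆ A ∪ B ∧ #X = r ∧ #(X ∩ B) ≤ 1}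

lemma atMostOneIn_of_le_one (A B : Finset α) {r : ℕ} (hr : r ≤ 1) :
    atMostOneIn A B r = (A ∪ B).powersetCard r := by
  ext X
  simp only [atMostOneIn, Set.mem_ofPred_eq, mem_coe, mem_powersetCard]
  refine and_congr_right fun _ => and_iff_left_of_imp fun hX => ?_
  exact (card_le_card inter_subset_left).trans (hX.trans_le hr)

lemma atMostOneIn_empty_left (B : Finset α) (r : ℕ) :
    atMostOneIn ∅ B (r + 2) = ∅ := by
  refine Set.eq_empty_of_forall_notMem fun X ⟨hXB, hcard, hle⟩ => ?_
  rw [empty_union] at hXB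
  rw [inter_eq_left.2 hXB] at hle
  omega

lemma atMostOneIn_empty_right (A : Finset α) (r : ℕ) :
    atMostOneIn A ∅ r = A.powersetCard r := by
  ext X
  simp [atMostOneIn]

/-- The complete bipartite graph between disjoint `A` and `B`. -/
def biclique (A B : Finset α) : Set (Finset α) :=
  A.powersetCard 1 ⊻ B.powersetCard 1

lemma isBox_biclique {A B : Finset α} (hAB : Disjoint A B) : IsBox 2 (biclique A B) :=
  (isBox_one A).sups (isBox_one B) (powersetCard_subset_Iic A 1) (powersetCard_subset_Iic B 1) hAB

lemma mem_biclique {A B X : Finset α} : X ∈ biclique A B ↔ ∃ x ∈ A, ∃ y ∈ B, X = {x, y} := by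
  simp only [biclique, Set.mem_sups, mem_coe, powersetCard_one, mem_map, exists_exists_and_eq_and,
    Embedding.coeFn_mk, sup_eq_union, eq_comm (a := X)]
  rfl

lemma biclique_subset_Iic {A B : Finset α} : biclique A B ⊆ Set.Iic (A ∪ B) :=
  Set.sups_subset_iff.2 fun _ hX _ hY => union_subset_union
    (powersetCard_subset_Iic A 1 hX) (powersetCard_subset_Iic B 1 hY)

lemma mem_powersetCard_sups_biclique {A B X : Finset α} {a : α} {r : ℕ} (haA : a ∉ A)
    (haB : a ∉ B) (hAB : Disjoint A B) :
    X ∈ (A.powersetCard r : Set (Finset α)) ⊻ biclique {a} B ↔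
      X ⊆ insert a A ∪ B ∧ #X = r + 2 ∧ a ∈ X ∧ #(X ∩ B) = 1 := by
  constructor
  · rintro ⟨Y, hY, Z, hZ, rfl⟩
    obtain ⟨x, hx, b, hb, rfl⟩ := mem_biclique.1 hZ
    obtain rfl := mem_singleton.1 hx
    obtain ⟨hYA, rfl⟩ := mem_powersetCard.1 (mem_coe.1 hY)
    have hbY : b ∉ Y := fun h => disjoint_left.1 hAB (hYA h) hb
    have hYB : Y ∩ B = ∅ := disjoint_iff_inter_eq_empty.1 (hAB.mono_left hYA)
    have hxY : x ∉ Y := fun h => haA (hYA h)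
    have hxb : x ≠ b := ne_of_mem_of_not_mem hb haB |>.symm
    refine ⟨?_, ?_, by simp, ?_⟩ <;> simp only [sup_eq_union]
    · grind
    · rw [card_union_of_disjoint (by simp [hxY, hbY]), card_pair hxb]
    · rw [union_inter_distrib_right, hYB, empty_union, insert_inter_of_notMem haB,
        singleton_inter_of_mem hb, card_singleton]
  · rintro ⟨hX, hcard, haX, hXB⟩
    obtain ⟨b, hb⟩ := card_eq_one.1 hXB
    have hbX : b ∈ X ∩ B := hb ▸ mem_singleton_self b
    have hab : {a, b} ⊆ X := by grind
    have hne : a ≠ b := by grind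
    refine ⟨X \ {a, b}, mem_powersetCard.2 ⟨fun x hx => ?_, ?_⟩, {a, b},
      mem_biclique.2 ⟨a, mem_singleton_self a, b, (mem_inter.1 hbX).2, rfl⟩,
      sdiff_union_of_subset hab⟩
    · have : x ∉ X ∩ B := by grind
      grind
    · rw [card_sdiff_of_subset hab, card_pair hne, hcard, Nat.add_sub_cancel]

lemma atMostOneIn_insert {A B : Finset α} {a : α} (haA : a ∉ A) (haB : a ∉ B)
    (hAB : Disjoint A B) (r : ℕ) :
    atMostOneIn (insert a A) B (r + 2) = atMostOneIn A (insert a B) (r + 2) ∪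
      (A.powersetCard r : Set (Finset α)) ⊻ biclique {a} B := by
  ext X
  rw [Set.mem_union, mem_powersetCard_sups_biclique haA haB hAB]
  simp only [atMostOneIn, Set.mem_ofPred_eq, insert_union, union_insert]
  by_cases haX : a ∈ X
  · rw [inter_insert_of_mem haX, card_insert_of_notMem (fun h => haB (mem_inter.1 h).2)]
    grind
  · rw [inter_insert_of_notMem haX]
    grind

lemma disjoint_atMostOneIn {A B : Finset α} {a : α} (haA : a ∉ A) (haB : a ∉ B)
    (hAB : Disjoint A B) (r : ℕ) : Disjoint (atMostOneIn A (insert a B) (r + 2))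
      ((A.powersetCard r : Set (Finset α)) ⊻ biclique {a} B) := by
  refine Set.disjoint_left.2 fun X hX hX' => ?_
  obtain ⟨-, -, haX, hXB⟩ := (mem_powersetCard_sups_biclique haA haB hAB).1 hX'
  have hle := hX.2.2
  rw [inter_insert_of_mem haX, card_insert_of_notMem (fun h => haB (mem_inter.1 h).2)] at hle
  omega

lemma boxPartition_atMostOneIn_of_le_one (A B : Finset α) {r : ℕ} (hr : r ≤ 1) :
    BoxPartition r ((#A).choose (r / 2)) (atMostOneIn A B r) := by
  rw [atMostOneIn_of_le_one A B hr, Nat.div_eq_of_lt (by lia), Nat.choose_zero_right]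
  interval_cases r
  · rw [powersetCard_zero, coe_singleton]
    exact isBox_zero.boxPartition
  · exact (isBox_one (A ∪ B)).boxPartition

/-- On ordered vertices, this is the partition of the `r`-sets `x₁ < ⋯ < xᵣ` according to the
values of `x₂, x₄, …`. -/
lemma boxPartition_atMostOneIn {A B : Finset α} (r : ℕ) (hAB : Disjoint A B) :
    BoxPartition r ((#A).choose (r / 2)) (atMostOneIn A B r) := by
  induction A using Finset.induction_on generalizing B r with
  | empty =>
    match r with
    | 0 | 1 => exact boxPartition_atMostOneIn_of_le_one _ B (by norm_num)
    | r + 2 => simpa [atMostOneIn_empty_left] using boxPartition_empty (r + 2)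
  | insert a A haA ih =>
    obtain ⟨haB, hAB⟩ := disjoint_insert_left.1 hAB
    match r with
    | 0 | 1 => exact boxPartition_atMostOneIn_of_le_one _ B (by norm_num)
    | r + 2 =>
      have hleft := ih r (disjoint_empty_right A)
      rw [atMostOneIn_empty_right] at hleft
      have hright := (isBox_biclique (disjoint_singleton_left.2 haB)).boxPartition
      have hAaB : Disjoint A (insert a B) := disjoint_insert_right.2 ⟨haA, hAB⟩
      have hmeet := hleft.sups hright (powersetCard_subset_Iic A r) biclique_subset_Iic hAaB
      have hunion := (ih (r + 2) hAaB).union hmeet (disjoint_atMostOneIn haA haB hAB r)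
      rw [← atMostOneIn_insert haA haB hAB] at hunion
      refine hunion.mono ?_
      rw [card_insert_of_notMem haA, mul_one, Nat.add_div_right r two_pos, Nat.choose_succ_succ,
        add_comm]

lemma boxPartition_powersetCard (A : Finset α) (r : ℕ) :
    BoxPartition r ((#A).choose (r / 2)) (A.powersetCard r : Set (Finset α)) :=
  atMostOneIn_empty_right A r ▸ boxPartition_atMostOneIn r (disjoint_empty_right A)

lemma f_le_choose (r n : ℕ) : f r n ≤ n.choose (r / 2) := by
  simpa only [card_range] using f_le_of_boxPartition (boxPartition_powersetCard (range n) r)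

end ChooseBound

section EdgePairs

/-- The edge `ij` belongs to the complete bipartite graph with parts `P` and `Q`. -/
def Separates {γ : Type*} (P Q : Finset γ) (i j : γ) : Prop :=
  i ∈ P ∧ j ∈ Q ∨ i ∈ Q ∧ j ∈ P

instance {γ : Type*} [DecidableEq γ] (P Q : Finset γ) (i j : γ) : Decidable (Separates P Q i j) :=
  inferInstanceAs (Decidable (_ ∨ _))

/-- A partition of `E(K_a) × E(K_b)`, where `K_a` and `K_b` are the complete graphs on `{1, …, a}`
and `{1, …, b}`, into the products of the biclique `P t, Q t` with the biclique `R t, S t`. -/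
structure EdgePairPartition (a b : ℕ) (κ : Type) where
  (P Q R S : κ → Finset ℕ)
  subset_left : ∀ t, P t ∪ Q t ⊆ Icc 1 a
  subset_right : ∀ t, R t ∪ S t ⊆ Icc 1 b
  disjoint_left : ∀ t, Disjoint (P t) (Q t)
  disjoint_right : ∀ t, Disjoint (R t) (S t)
  existsUnique : ∀ i ∈ Icc 1 a, ∀ j ∈ Icc 1 a, i ≠ j → ∀ k ∈ Icc 1 b, ∀ l ∈ Icc 1 b, k ≠ l →
    ∃! t, Separates (P t) (Q t) i j ∧ Separates (R t) (S t) k l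

/-- Products of Graham–Pollak partitions would need `3 * 5 = 15` parts. -/
def edgePairPartitionFourSix : EdgePairPartition 4 6 (Fin 14) where
  P := ![{1, 2}, {1, 2}, {1, 3}, {1, 3}, {1, 4}, {1, 4}, {1}, {3}, {1}, {2}, {1}, {1}, {2}, {2}]
  Q := ![{3, 4}, {3, 4}, {2, 4}, {2, 4}, {2, 3}, {2, 3}, {2}, {4}, {3}, {4}, {4}, {4}, {3}, {3}]
  R := ![{2}, {1}, {3}, {1, 5}, {3, 5, 6}, {1, 6}, {1, 2}, {1, 2}, {1, 5, 6}, {1, 5, 6},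
    {2, 4, 5}, {1, 4}, {2, 4, 5}, {1, 4}]
  S := ![{3, 4}, {4, 6}, {5, 6}, {2}, {4}, {5}, {3, 4, 6}, {3, 4, 6}, {2, 3}, {2, 3},
    {6}, {3, 5}, {6}, {3, 5}]
  subset_left := by decide
  subset_right := by decide
  disjoint_left := by decide
  disjoint_right := by decide
  existsUnique := by
    simp only [ExistsUnique]
    decide +kernel

/-- The label of the vertex `x` in the `j`-th of the blown-up copies of `K_{m+1}` that partition the
edges of the complete graph on `ℕ`: the vertices `j * m, …, j * m + m - 1` have the labels
`1, …, m`, the later ones `m + 1`, and the earlier ones, outside the copy, `0`. -/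
def label (m j x : ℕ) : ℕ := min (x + 1 - j * m) (m + 1)

lemma existsUnique_label {m d x y : ℕ} (hm : 0 < m) (hxy : x ≠ y) (hx : x ≤ d * m)
    (hy : y ≤ d * m) : ∃! j : Fin d, label m j x ∈ Icc 1 (m + 1) ∧ label m j y ∈ Icc 1 (m + 1) ∧
      label m j x ≠ label m j y := by
  have hj : min x y / m < d := (Nat.div_lt_iff_lt_mul hm).2 (by lia)
  suffices h : ∀ j : Fin d, (label m j x ∈ Icc 1 (m + 1) ∧ label m j y ∈ Icc 1 (m + 1) ∧
      label m j x ≠ label m j y) ↔ j = ⟨min x y / m, hj⟩ by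
    simp only [h, existsUnique_eq]
  intro j
  have hcopy := Nat.div_eq_iff (x := min x y) (y := j) hm
  rw [Fin.ext_iff, eq_comm, hcopy]
  simp only [label, mem_Icc]
  generalize (j : ℕ) * m = u
  omega

lemma Separates.mem_and_ne {γ : Type*} [DecidableEq γ] {P Q T : Finset γ} {i j : γ}
    (h : Separates P Q i j) (hPQ : Disjoint P Q) (hT : P ∪ Q ⊆ T) : i ∈ T ∧ j ∈ T ∧ i ≠ j := by
  have hPT : P ⊆ T := union_subset_left hT
  have hQT : Q ⊆ T := union_subset_right hT
  rcases h with ⟨hi, hj⟩ | ⟨hi, hj⟩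
  · exact ⟨hPT hi, hQT hj, disjoint_iff_ne.1 hPQ i hi j hj⟩
  · exact ⟨hQT hi, hPT hj, (disjoint_iff_ne.1 hPQ j hj i hi).symm⟩

variable {α : Type*}

lemma exists_labels (A : Finset α) {m d : ℕ} (hm : 0 < m) (hA : #A ≤ d * m + 1) :
    ∃ c : Fin d → α → ℕ, ∀ x ∈ A, ∀ y ∈ A, x ≠ y →
      ∃! j, c j x ∈ Icc 1 (m + 1) ∧ c j y ∈ Icc 1 (m + 1) ∧ c j x ≠ c j y := by
  obtain ⟨g, hgA, hg⟩ := A.finite_toSet.exists_injOn_of_encard_le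
    (t := (range (d * m + 1) : Set ℕ)) <| by
      rwa [Set.encard_coe_eq_coe_finsetCard, Set.encard_coe_eq_coe_finsetCard, card_range,
        Nat.cast_le]
  have g_le (x : α) (hx : x ∈ A) : g x ≤ d * m := Nat.lt_succ_iff.1 (mem_range.1 (hgA hx))
  exact ⟨fun j x => label m j (g x), fun x hx y hy hxy =>
    existsUnique_label hm (hg.ne hx hy hxy) (g_le x hx) (g_le y hy)⟩

lemma disjoint_filter_mem {P Q : Finset ℕ} (A : Finset α) (c : α → ℕ) (hPQ : Disjoint P Q) :
    Disjoint {x ∈ A | c x ∈ P} {x ∈ A | c x ∈ Q} :=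
  disjoint_filter.2 fun _ _ hP hQ => disjoint_left.1 hPQ hP hQ

variable [DecidableEq α]

/-- The edges `xy` of the complete graph on `A` whose labels `c x`, `c y` are joined by the complete
bipartite graph with parts `P` and `Q`. -/
def bicliqueComap (A : Finset α) (c : α → ℕ) (P Q : Finset ℕ) : Set (Finset α) :=
  biclique {x ∈ A | c x ∈ P} {x ∈ A | c x ∈ Q}

lemma pair_mem_bicliqueComap {A : Finset α} {c : α → ℕ} {P Q : Finset ℕ} {x y : α} (hx : x ∈ A)
    (hy : y ∈ A) : {x, y} ∈ bicliqueComap A c P Q ↔ Separates P Q (c x) (c y) := by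
  simp only [bicliqueComap, mem_biclique, ← coe_inj, coe_pair, Set.pair_eq_pair_iff, Separates,
    mem_filter]
  grind

lemma isBox_bicliqueComap {P Q : Finset ℕ} (A : Finset α) (c : α → ℕ) (hPQ : Disjoint P Q) :
    IsBox 2 (bicliqueComap A c P Q) :=
  isBox_biclique (disjoint_filter_mem A c hPQ)

lemma bicliqueComap_subset {P Q : Finset ℕ} (A : Finset α) (c : α → ℕ) (hPQ : Disjoint P Q) :
    bicliqueComap A c P Q ⊆ (A.powersetCard 2 : Set (Finset α)) := by
  intro X hX
  obtain ⟨x, hx, y, hy, rfl⟩ := mem_biclique.1 hX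
  exact mem_powersetCard.2 ⟨insert_subset (mem_filter.1 hx).1
    (singleton_subset_iff.2 (mem_filter.1 hy).1),
    card_pair (disjoint_iff_ne.1 (disjoint_filter_mem A c hPQ) x hx y hy)⟩

lemma EdgePairPartition.boxPartition {m n d e : ℕ} {κ : Type} [Fintype κ] {A B : Finset α}
    (h : EdgePairPartition (m + 1) (n + 1) κ) (hm : 0 < m) (hn : 0 < n) (hAB : Disjoint A B)
    (hA : #A ≤ d * m + 1) (hB : #B ≤ e * n + 1) :
    BoxPartition 4 (d * e * Fintype.card κ)
      ((A.powersetCard 2 : Set (Finset α)) ⊻ (B.powersetCard 2 : Set (Finset α))) := by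
  obtain ⟨c, hc⟩ := exists_labels A hm hA
  obtain ⟨c', hc'⟩ := exists_labels B hn hB
  refine (boxPartition_sups (κ := Fin d × Fin e × κ)
    (fun a => isBox_bicliqueComap A (c a.1) (h.disjoint_left a.2.2))
    (fun a => isBox_bicliqueComap B (c' a.2.1) (h.disjoint_right a.2.2))
    (fun a => bicliqueComap_subset A _ (h.disjoint_left a.2.2))
    (fun a => bicliqueComap_subset B _ (h.disjoint_right a.2.2))
    (powersetCard_subset_Iic A 2) (powersetCard_subset_Iic B 2) hAB fun Y hY Z hZ => ?_).mono ?_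
  · obtain ⟨hYA, hYcard⟩ := mem_powersetCard.1 (mem_coe.1 hY)
    obtain ⟨hZB, hZcard⟩ := mem_powersetCard.1 (mem_coe.1 hZ)
    obtain ⟨x, y, hxy, rfl⟩ := card_eq_two.1 hYcard
    obtain ⟨z, w, hzw, rfl⟩ := card_eq_two.1 hZcard
    obtain ⟨hx, hy⟩ := insert_subset_iff.1 hYA
    obtain ⟨hz, hw⟩ := insert_subset_iff.1 hZB
    rw [singleton_subset_iff] at hy hw
    simp only [pair_mem_bicliqueComap, hx, hy, hz, hw]
    obtain ⟨i, ⟨hix, hiy, hi⟩, hi_unique⟩ := hc x hx y hy hxy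
    obtain ⟨j, ⟨hjz, hjw, hj⟩, hj_unique⟩ := hc' z hz w hw hzw
    obtain ⟨t, ht, ht_unique⟩ := h.existsUnique _ hix _ hiy hi _ hjz _ hjw hj
    refine ⟨(i, j, t), ht, ?_⟩
    rintro ⟨i', j', t'⟩ ⟨hxy', hzw'⟩
    obtain rfl := hi_unique i' (hxy'.mem_and_ne (h.disjoint_left t') (h.subset_left t'))
    obtain rfl := hj_unique j' (hzw'.mem_and_ne (h.disjoint_right t') (h.subset_right t'))
    rw [ht_unique t' ⟨hxy', hzw'⟩]
  · simp [mul_assoc]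

end EdgePairs

section Patterns

variable {α : Type*} {ι : Type} [DecidableEq ι]

/-- The subsets of `V` having exactly `ρ s` vertices of each colour `s`. -/
def pattern (V : Finset α) (c : α → ι) (ρ : ι → ℕ) : Set (Finset α) :=
  {X | X ⊆ V ∧ ∀ s, #{x ∈ X | c x = s} = ρ s}

variable {V : Finset α} {c : α → ι} {ρ σ : ι → ℕ}

lemma pattern_subset_Iic (V : Finset α) (c : α → ι) (ρ : ι → ℕ) :
    pattern V c ρ ⊆ Set.Iic {x ∈ V | ρ (c x) ≠ 0} := by
  refine fun X ⟨hXV, hX⟩ x hx => mem_filter.2 ⟨hXV hx, ?_⟩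
  rw [← hX, card_ne_zero]
  exact ⟨x, mem_filter.2 ⟨hx, rfl⟩⟩

lemma pattern_single (V : Finset α) (c : α → ι) (s : ι) (r : ℕ) :
    pattern V c (Pi.single s r) = ({x ∈ V | c x = s}.powersetCard r : Set (Finset α)) := by
  ext X
  rw [mem_coe, mem_powersetCard]
  constructor
  · intro hX
    have hXs : ∀ x ∈ X, c x = s := fun x hx =>
      of_not_not fun hne => (mem_filter.1 (pattern_subset_Iic V c _ hX hx)).2 (by simp [hne])
    have hcard := hX.2 s
    rw [filter_true_of_mem hXs, Pi.single_eq_same] at hcard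
    exact ⟨fun x hx => mem_filter.2 ⟨hX.1 hx, hXs x hx⟩, hcard⟩
  · rintro ⟨hX, rfl⟩
    refine ⟨hX.trans (filter_subset _ _), fun t => ?_⟩
    rcases eq_or_ne t s with rfl | hts
    · rw [Pi.single_eq_same, filter_true_of_mem fun x hx => (mem_filter.1 (hX hx)).2]
    · rw [Pi.single_eq_of_ne hts, card_eq_zero, filter_eq_empty_iff]
      exact fun x hx hxt => hts (hxt.symm.trans (mem_filter.1 (hX hx)).2)

lemma pattern_zero (V : Finset α) (c : α → ι) : pattern V c 0 = {∅} := by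
  ext X
  constructor
  · intro hX
    exact eq_empty_of_forall_notMem fun x hx =>
      (mem_filter.1 (pattern_subset_Iic V c 0 hX hx)).2 rfl
  · rintro rfl
    exact ⟨empty_subset V, fun s => by rw [filter_empty, card_empty, Pi.zero_apply]⟩

omit [DecidableEq ι] in
lemma disjoint_pattern_supports (V : Finset α) (c : α → ι) (h : ∀ s, ρ s = 0 ∨ σ s = 0) :
    Disjoint {x ∈ V | ρ (c x) ≠ 0} {x ∈ V | σ (c x) ≠ 0} :=
  disjoint_filter.2 fun x _ hρ hσ => (h (c x)).elim hρ hσ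

lemma card_filter_fiber (X : Finset α) (c : α → ι) (p : ι → Prop) [DecidablePred p] (s : ι) :
    #{x ∈ {x ∈ X | p (c x)} | c x = s} = if p s then #{x ∈ X | c x = s} else 0 := by
  rw [filter_filter]
  split_ifs with hs
  · congr 1
    exact filter_congr fun x _ => and_iff_right_of_imp fun hx => hx ▸ hs
  · rw [card_eq_zero, filter_eq_empty_iff]
    exact fun x _ hx => hs (hx.2 ▸ hx.1)

variable [DecidableEq α]

lemma pattern_add (h : ∀ s, ρ s = 0 ∨ σ s = 0) :
    pattern V c (ρ + σ) = pattern V c ρ ⊻ pattern V c σ := by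
  ext X
  constructor
  · intro hX
    refine ⟨{x ∈ X | ρ (c x) ≠ 0}, ⟨(filter_subset _ _).trans hX.1, fun s => ?_⟩,
      {x ∈ X | ¬ ρ (c x) ≠ 0}, ⟨(filter_subset _ _).trans hX.1, fun s => ?_⟩,
      filter_union_filter_not_eq _ _⟩
    · rw [card_filter_fiber X c (ρ · ≠ 0), hX.2 s, Pi.add_apply]
      grind
    · rw [card_filter_fiber X c (¬ ρ · ≠ 0), hX.2 s, Pi.add_apply]
      grind
  · rintro ⟨Y, hY, Z, hZ, rfl⟩
    refine ⟨union_subset hY.1 hZ.1, fun s => ?_⟩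
    have hYZ : Disjoint Y Z := (disjoint_pattern_supports V c h).mono
      (pattern_subset_Iic V c ρ hY) (pattern_subset_Iic V c σ hZ)
    simp only [sup_eq_union]
    rw [filter_union, card_union_of_disjoint (disjoint_filter_filter hYZ), hY.2, hZ.2,
      Pi.add_apply]

lemma BoxPartition.pattern_add {r r' k k' : ℕ} (hρ : BoxPartition r k (pattern V c ρ))
    (hσ : BoxPartition r' k' (pattern V c σ)) (h : ∀ s, ρ s = 0 ∨ σ s = 0) :
    BoxPartition (r + r') (k * k') (pattern V c (ρ + σ)) := by
  rw [GrahamPollak.pattern_add h]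
  exact hρ.sups hσ (pattern_subset_Iic V c ρ) (pattern_subset_Iic V c σ)
    (disjoint_pattern_supports V c h)

omit [DecidableEq α] in
lemma piecewise_insert_eq_add {s : ι} {S : Finset ι} (hs : s ∉ S) (ρ : ι → ℕ) :
    (insert s S).piecewise ρ 0 = Pi.single s (ρ s) + S.piecewise ρ 0 := by
  ext t
  rcases eq_or_ne t s with rfl | hts
  · simp [hs]
  · simp [hts, piecewise]

lemma BoxPartition.pattern_piecewise_insert {s : ι} {S : Finset ι} {r k k' : ℕ}
    (hs : s ∉ S)
    (hsing : BoxPartition (ρ s) k ({x ∈ V | c x = s}.powersetCard (ρ s) : Set (Finset α)))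
    (hS : BoxPartition r k' (pattern V c (S.piecewise ρ 0))) :
    BoxPartition (ρ s + r) (k * k') (pattern V c ((insert s S).piecewise ρ 0)) := by
  rw [piecewise_insert_eq_add hs]
  rw [← pattern_single] at hsing
  refine hsing.pattern_add hS fun t => ?_
  rcases eq_or_ne t s with rfl | hts
  · simp [hs]
  · simp [hts]

lemma boxPartition_pattern_piecewise {T : ℕ} (hT : ∀ s, #{x ∈ V | c x = s} ≤ T) (ρ : ι → ℕ)
    (S : Finset ι) : BoxPartition (∑ s ∈ S, ρ s) (T ^ ∑ s ∈ S, ρ s / 2)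
      (pattern V c (S.piecewise ρ 0)) := by
  induction S using Finset.induction_on with
  | empty =>
    rw [piecewise_empty, pattern_zero]
    exact isBox_zero.boxPartition
  | insert s S hs ih =>
    rw [sum_insert hs, sum_insert hs, pow_add]
    refine .pattern_piecewise_insert hs ((boxPartition_powersetCard _ _).mono ?_) ih
    exact (Nat.choose_le_pow _ _).trans (Nat.pow_le_pow_left (hT s) _)

lemma boxPartition_pattern_two {T M : ℕ} (hT : ∀ s, #{x ∈ V | c x = s} ≤ T)
    (hM : ∀ s t, s ≠ t → BoxPartition 4 M (({x ∈ V | c x = s}.powersetCard 2 : Set (Finset α)) ⊻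
      ({x ∈ V | c x = t}.powersetCard 2 : Set (Finset α)))) (S : Finset ι) :
    BoxPartition (2 * #S) (M ^ (#S / 2) * T ^ (#S % 2)) (pattern V c (S.piecewise 2 0)) := by
  induction hk : #S using Nat.twoStepInduction generalizing S with
  | zero | one => simpa [hk, mul_comm] using boxPartition_pattern_piecewise hT 2 S
  | more k ih _ =>
    obtain ⟨s, S', hs, rfl, hS'⟩ := card_eq_succ.1 hk
    obtain ⟨t, S, ht, rfl, hS⟩ := card_eq_succ.1 hS'
    obtain ⟨hst, hs⟩ := not_or.1 (mem_insert.not.1 hs)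
    have hpair : BoxPartition 4 M (pattern V c (Pi.single s 2 + Pi.single t 2)) := by
      rw [pattern_add fun u => ?_, pattern_single, pattern_single]
      · exact hM s t hst
      · rcases eq_or_ne u s with rfl | hus <;> simp [*]
    have hsplit : (insert s (insert t S)).piecewise (2 : ι → ℕ) 0 =
        Pi.single s 2 + Pi.single t 2 + S.piecewise 2 0 := by
      rw [piecewise_insert_eq_add (by simp [hst, hs]), piecewise_insert_eq_add ht, ← add_assoc,
        Pi.ofNat_apply, Pi.ofNat_apply]
    have hadd := hpair.pattern_add (ih S hS) fun u => ?_
    · rw [hsplit]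
      convert hadd using 1
      · ring
      · rw [Nat.add_div_right k two_pos, Nat.add_mod_right, pow_succ']
        ring
    · by_cases hu : u ∈ S
      · have hus : u ≠ s := fun h => hs (h ▸ hu)
        have hut : u ≠ t := fun h => ht (h ▸ hu)
        simp [hus, hut]
      · simp [hu]

variable [Fintype ι]

omit [DecidableEq α] in
lemma sum_card_fibers (X : Finset α) (c : α → ι) : ∑ s, #{x ∈ X | c x = s} = #X :=
  (card_eq_sum_card_fiberwise fun _ _ => mem_coe.2 (mem_univ _)).symm

lemma boxPartition_of_patterns {r : ℕ} (V : Finset α) (c : α → ι) {N : (ι → ℕ) → ℕ}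
    (hN : ∀ ρ ∈ piAntidiag univ r, BoxPartition r (N ρ) (pattern V c ρ)) :
    BoxPartition r (∑ ρ ∈ piAntidiag univ r, N ρ) (V.powersetCard r : Set (Finset α)) := by
  rw [← sum_coe_sort]
  refine BoxPartition.iUnion (G := fun ρ : piAntidiag univ r => pattern V c ρ) (fun ρ => hN ρ ρ.2)
    (fun ρ X hX => ?_) fun X hX => ?_
  · refine mem_powersetCard.2 ⟨hX.1, ?_⟩
    rw [← sum_card_fibers X c, ← (mem_piAntidiag.1 ρ.2).1]
    exact sum_congr rfl fun s _ => hX.2 s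
  · obtain ⟨hXV, rfl⟩ := mem_powersetCard.1 (mem_coe.1 hX)
    refine ⟨⟨fun s => #{x ∈ X | c x = s}, ?_⟩, ⟨hXV, fun s => rfl⟩,
      fun ρ hρ => Subtype.ext (funext fun s => (hρ.2 s).symm)⟩
    exact mem_piAntidiag.2 ⟨sum_card_fibers X c, fun s _ => mem_univ s⟩

end Patterns

section Counting

variable (ι : Type) [Fintype ι] [DecidableEq ι]

/-- The patterns of total size `2 * k` that take the value `2` on `k` colours and `0` on the
others. -/
def twoPatterns (k : ℕ) : Finset (ι → ℕ) :=
  (univ.powersetCard k).image fun S => S.piecewise 2 0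

/-- The patterns of total size `2 * k` with even entries. -/
def evenPatterns (k : ℕ) : Finset (ι → ℕ) :=
  {ρ ∈ piAntidiag univ (2 * k) | ∀ s, 2 ∣ ρ s}

lemma card_twoPatterns (k : ℕ) : #(twoPatterns ι k) = (Fintype.card ι).choose k := by
  have hinj : Injective fun S : Finset ι => S.piecewise (2 : ι → ℕ) 0 := by
    intro S S' h
    ext s
    have := congrFun h s
    by_cases hs : s ∈ S <;> by_cases hs' : s ∈ S' <;> simp_all
  rw [twoPatterns, card_image_of_injective _ hinj, card_powersetCard, card_univ]

lemma card_piAntidiag_univ (n : ℕ) :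
    #(piAntidiag (univ : Finset ι) n) = (Fintype.card ι).multichoose n := by
  rw [← map_sym_eq_piAntidiag, card_map, sym_univ, card_univ, Sym.card_sym_eq_multichoose]

lemma card_evenPatterns (k : ℕ) : #(evenPatterns ι k) = (Fintype.card ι).multichoose k := by
  have hmap := map_nsmul_piAntidiag_univ (ι := ι) k two_ne_zero
  rw [filter_congr_decidable] at hmap
  rw [evenPatterns, ← hmap, card_map, card_piAntidiag_univ]

lemma twoPatterns_subset_evenPatterns (k : ℕ) : twoPatterns ι k ⊆ evenPatterns ι k := by
  intro ρ hρ
  obtain ⟨S, hS, rfl⟩ := mem_image.1 hρ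
  refine mem_filter.2 ⟨mem_piAntidiag.2 ⟨?_, by simp⟩, fun s => ?_⟩
  · simp [sum_piecewise, (mem_powersetCard.1 hS).2, mul_comm]
  · by_cases hs : s ∈ S <;> simp [hs]

variable {ι}

lemma sum_half_le {k : ℕ} {ρ : ι → ℕ} (hρ : ρ ∈ piAntidiag univ (2 * k)) :
    ∑ s, ρ s / 2 ≤ k := by
  have hle : ∑ s, 2 * (ρ s / 2) ≤ ∑ s, ρ s := sum_le_sum fun s _ => Nat.mul_div_le _ _
  rw [(mem_piAntidiag.1 hρ).1, ← mul_sum] at hle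
  exact Nat.le_of_mul_le_mul_left hle two_pos

lemma sum_half_lt {k : ℕ} {ρ : ι → ℕ} (hρ : ρ ∈ piAntidiag univ (2 * k) \ evenPatterns ι k) :
    ∑ s, ρ s / 2 < k := by
  obtain ⟨hρ, hodd⟩ := mem_sdiff.1 hρ
  obtain ⟨s, hs⟩ : ∃ s, ¬ 2 ∣ ρ s := by
    contrapose! hodd
    exact mem_filter.2 ⟨hρ, hodd⟩
  have hlt : ∑ s, 2 * (ρ s / 2) < ∑ s, ρ s :=
    sum_lt_sum (fun s _ => Nat.mul_div_le _ _) ⟨s, mem_univ s, by omega⟩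
  rw [(mem_piAntidiag.1 hρ).1, ← mul_sum] at hlt
  exact lt_of_mul_lt_mul_left' hlt

/-- The number of boxes spent on the pattern `ρ` of total size `2 * k` when colour classes have
at most `T` vertices and the pairs in two given classes can be handled with `M` boxes. -/
def patternCost (T M k : ℕ) (ρ : ι → ℕ) : ℕ :=
  if ρ ∈ twoPatterns ι k then M ^ (k / 2) * T ^ (k % 2) else T ^ ∑ s, ρ s / 2

lemma boxPartition_patternCost {α : Type*} [DecidableEq α] {V : Finset α} {c : α → ι}
    {T M k : ℕ} (hT : ∀ s, #{x ∈ V | c x = s} ≤ T)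
    (hM : ∀ s t, s ≠ t → BoxPartition 4 M (({x ∈ V | c x = s}.powersetCard 2 : Set (Finset α)) ⊻
      ({x ∈ V | c x = t}.powersetCard 2 : Set (Finset α))))
    {ρ : ι → ℕ} (hρ : ρ ∈ piAntidiag univ (2 * k)) :
    BoxPartition (2 * k) (patternCost T M k ρ) (pattern V c ρ) := by
  rw [patternCost]
  split_ifs with htwo
  · obtain ⟨S, hS, rfl⟩ := mem_image.1 htwo
    obtain rfl := (mem_powersetCard.1 hS).2
    exact boxPartition_pattern_two hT hM S
  · rw [← (mem_piAntidiag.1 hρ).1]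
    simpa using boxPartition_pattern_piecewise hT ρ univ

variable {T M k : ℕ} {δ : ℝ}

lemma patternCost_le_of_mem_twoPatterns {ρ : ι → ℕ} (hM : (M : ℝ) ≤ δ * T ^ 2)
    (hρ : ρ ∈ twoPatterns ι k) : (patternCost T M k ρ : ℝ) ≤ δ ^ (k / 2) * T ^ k := by
  rw [patternCost, if_pos hρ]
  push_cast
  calc (M : ℝ) ^ (k / 2) * T ^ (k % 2) ≤ (δ * T ^ 2) ^ (k / 2) * T ^ (k % 2) := by gcongr
    _ = δ ^ (k / 2) * T ^ k := by
      rw [mul_pow, mul_assoc, ← pow_mul, ← pow_add, Nat.div_add_mod]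

lemma patternCost_le_of_mem_evenPatterns {ρ : ι → ℕ} (hT : 0 < T)
    (hρ : ρ ∈ evenPatterns ι k \ twoPatterns ι k) : (patternCost T M k ρ : ℝ) ≤ T ^ k := by
  rw [patternCost, if_neg (mem_sdiff.1 hρ).2]
  exact_mod_cast Nat.pow_le_pow_right hT (sum_half_le (mem_filter.1 (mem_sdiff.1 hρ).1).1)

lemma patternCost_le_of_notMem_evenPatterns {ρ : ι → ℕ} (hT : 0 < T)
    (hρ : ρ ∈ piAntidiag univ (2 * k) \ evenPatterns ι k) :
    (patternCost T M k ρ : ℝ) ≤ T ^ k / T := by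
  rw [patternCost,
    if_neg fun htwo => (mem_sdiff.1 hρ).2 (twoPatterns_subset_evenPatterns ι k htwo),
    le_div_iff₀ (mod_cast hT)]
  exact_mod_cast Nat.pow_le_pow_right hT (sum_half_lt hρ)

lemma sum_patternCost_le (ι : Type) [Fintype ι] [DecidableEq ι] (hT : 0 < T)
    (hM : (M : ℝ) ≤ δ * T ^ 2) :
    ∑ ρ ∈ piAntidiag (univ : Finset ι) (2 * k), (patternCost T M k ρ : ℝ) ≤
      ((Fintype.card ι).choose k * δ ^ (k / 2) +
        ((Fintype.card ι).multichoose k - (Fintype.card ι).choose k) +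
        (Fintype.card ι).multichoose (2 * k) / T) * T ^ k := by
  have htwo := sum_le_card_nsmul _ _ _
    fun ρ => patternCost_le_of_mem_twoPatterns (ι := ι) (k := k) hM
  have heven := sum_le_card_nsmul _ _ _
    fun ρ => patternCost_le_of_mem_evenPatterns (ι := ι) (M := M) (k := k) hT
  have hodd := sum_le_card_nsmul _ _ _
    fun ρ => patternCost_le_of_notMem_evenPatterns (ι := ι) (M := M) (k := k) hT
  have hcard : (#(piAntidiag univ (2 * k) \ evenPatterns ι k) : ℝ) ≤
      (Fintype.card ι).multichoose (2 * k) := by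
    rw [← card_piAntidiag_univ]
    exact mod_cast card_le_card sdiff_subset
  rw [nsmul_eq_mul] at htwo heven hodd
  rw [cast_card_sdiff (twoPatterns_subset_evenPatterns ι k), card_evenPatterns] at heven
  rw [card_twoPatterns] at htwo heven
  have hsubset : evenPatterns ι k ⊆ piAntidiag univ (2 * k) := filter_subset _ _
  rw [← sum_sdiff hsubset, ← sum_sdiff (twoPatterns_subset_evenPatterns ι k)]
  calc _ ≤ _ := add_le_add hodd (add_le_add heven htwo)
    _ ≤ (Fintype.card ι).multichoose (2 * k) * (T ^ k / T) + _ := by gcongr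
    _ = _ := by ring

lemma card_fiber_mod_le {L T n : ℕ} [NeZero L] (hn : n ≤ L * T) (s : Fin L) :
    #{x ∈ range n | Fin.ofNat L x = s} ≤ T := by
  rw [← card_range T]
  refine card_le_card_of_injOn (· / L) (fun x hx => ?_) fun x hx y hy hxy => ?_
  · rw [coe_filter, Set.mem_ofPred_eq, mem_range] at hx
    rw [mem_coe, mem_range]
    exact Nat.div_lt_of_lt_mul (hx.1.trans_le hn)
  · rw [coe_filter, Set.mem_ofPred_eq] at hx hy
    have hmod : x % L = y % L := congrArg Fin.val (hx.2.trans hy.2.symm)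
    rw [← Nat.div_add_mod x L, ← Nat.div_add_mod y L, hmod, show x / L = y / L from hxy]

lemma f_two_mul_le {L n q : ℕ} [NeZero L] (hn : n ≤ L * (15 * q + 1)) (k : ℕ) :
    (f (2 * k) n : ℝ) ≤ (L.choose k * (14 / 15) ^ (k / 2) + (L.multichoose k - L.choose k) +
      L.multichoose (2 * k) / (15 * q + 1 : ℕ)) * (15 * q + 1 : ℕ) ^ k := by
  set T := 15 * q + 1 with hT
  set M := 5 * q * (3 * q) * 14 with hM
  let c : ℕ → Fin L := Fin.ofNat L
  have hfiber : ∀ s, #{x ∈ range n | c x = s} ≤ T := card_fiber_mod_le hn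
  have hpairs (s t : Fin L) (hst : s ≠ t) : BoxPartition 4 M
      (({x ∈ range n | c x = s}.powersetCard 2 : Set (Finset ℕ)) ⊻
        ({x ∈ range n | c x = t}.powersetCard 2 : Set (Finset ℕ))) :=
    edgePairPartitionFourSix.boxPartition three_pos (by norm_num)
      (disjoint_filter.2 fun x _ hs ht => hst (hs.symm.trans ht))
      ((hfiber s).trans (by omega)) ((hfiber t).trans (by omega))
  have hf := f_le_of_boxPartition (boxPartition_of_patterns (range n) c
    fun ρ hρ => boxPartition_patternCost (k := k) hfiber hpairs hρ)
  have hMT : (M : ℝ) ≤ 14 / 15 * T ^ 2 := by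
    push_cast [hM, hT]
    nlinarith [Nat.cast_nonneg (α := ℝ) q]
  have hsum := sum_patternCost_le (Fin L) (k := k) (by omega : 0 < T) hMT
  rw [Fintype.card_fin] at hsum
  exact le_trans (mod_cast hf) hsum

end Counting

section Asymptotics

open Filter Topology

lemma tendsto_choose_mul_factorial_div_pow (k : ℕ) :
    Tendsto (fun n : ℕ => (n.choose k : ℝ) * k.factorial / n ^ k) atTop (𝓝 1) := by
  have hne : ∀ᶠ n : ℕ in atTop, (n ^ k / k.factorial : ℝ) ≠ 0 := by
    filter_upwards [eventually_gt_atTop 0] with n hn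
    positivity
  refine ((Asymptotics.isEquivalent_iff_tendsto_one hne).1 (isEquivalent_choose k)).congr
    fun n => ?_
  rw [Pi.div_apply, div_div_eq_mul_div]

lemma tendsto_multichoose_mul_factorial_div_pow (k : ℕ) :
    Tendsto (fun n : ℕ => (n.multichoose k : ℝ) * k.factorial / n ^ k) atTop (𝓝 1) := by
  have hshift : Tendsto (fun n : ℕ => n + k - 1) atTop atTop :=
    tendsto_atTop_mono (fun n => by omega) (tendsto_sub_atTop_nat 1)
  have hratio : Tendsto (fun n : ℕ => ((n + k - 1 : ℕ) : ℝ) / n) atTop (𝓝 1) := by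
    have h := (tendsto_const_div_atTop_nhds_zero_nat (k - 1 : ℝ)).const_add 1
    rw [add_zero] at h
    refine h.congr' ?_
    filter_upwards [eventually_gt_atTop 0] with n hn
    have hn' : (n : ℝ) ≠ 0 := by positivity
    rw [Nat.cast_sub (by omega)]
    push_cast
    field_simp
    ring
  have h := ((tendsto_choose_mul_factorial_div_pow k).comp hshift).mul (hratio.pow k)
  rw [one_pow, one_mul] at h
  refine h.congr' ?_
  filter_upwards [eventually_gt_atTop 1] with n hn
  have hpos : (0 : ℝ) < (n + k - 1 : ℕ) := mod_cast (by omega)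
  rw [Nat.multichoose_eq, comp_apply, div_pow, div_mul_div_cancel₀ (by positivity)]

lemma exists_num_classes (k : ℕ) {γ c : ℝ} (hc : γ < c) : ∃ L : ℕ, 0 < L ∧
    (L.choose k * γ + (L.multichoose k - L.choose k) : ℝ) * k.factorial / L ^ k < c := by
  have hC := tendsto_choose_mul_factorial_div_pow k
  have h := (hC.mul_const γ).add ((tendsto_multichoose_mul_factorial_div_pow k).sub hC)
  rw [one_mul, sub_self, add_zero] at h
  obtain ⟨L, hL, hL0⟩ := ((h.eventually_lt_const hc).and (eventually_gt_atTop 0)).exists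
  refine ⟨L, hL0, lt_of_eq_of_lt ?_ hL⟩
  ring

lemma exists_class_size {L : ℕ} (hL : 0 < L) : ∃ q : ℕ → ℕ, (∀ n, n ≤ L * (15 * q n + 1)) ∧
    Tendsto (fun n : ℕ => ((15 * q n + 1 : ℕ) : ℝ) / n) atTop (𝓝 (L : ℝ)⁻¹) := by
  refine ⟨fun n => ⌈(15 * L : ℝ)⁻¹ * n⌉₊, fun n => ?_, ?_⟩
  · have hceil := Nat.le_ceil ((15 * L : ℝ)⁻¹ * n)
    rw [inv_mul_le_iff₀ (by positivity)] at hceil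
    have hle : n ≤ 15 * L * ⌈(15 * L : ℝ)⁻¹ * n⌉₊ := by exact_mod_cast hceil
    linarith
  · have hceil := (tendsto_nat_ceil_mul_div_atTop (by positivity : 0 ≤ (15 * L : ℝ)⁻¹)).comp
      (tendsto_natCast_atTop_atTop (R := ℝ))
    have h := (hceil.const_mul 15).add (tendsto_one_div_atTop_nhds_zero_nat (𝕜 := ℝ))
    rw [mul_inv, mul_inv_cancel_left₀ (by norm_num), add_zero] at h
    refine h.congr fun n => ?_
    rw [comp_apply, ← mul_inv]
    push_cast
    ring

lemma eventually_f_two_mul_le {k : ℕ} {c : ℝ} (hc : (14 / 15 : ℝ) ^ (k / 2) < c) :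
    ∀ᶠ n : ℕ in atTop, (f (2 * k) n : ℝ) ≤ c * n.choose k := by
  obtain ⟨L, hL0, hL⟩ := exists_num_classes k hc
  have : NeZero L := ⟨hL0.ne'⟩
  set A : ℝ := L.choose k * (14 / 15) ^ (k / 2) + (L.multichoose k - L.choose k)
  obtain ⟨q, hn_le, hT⟩ := exists_class_size hL0
  set T : ℕ → ℕ := fun n => 15 * q n + 1
  have hT_top : Tendsto (fun n => (T n : ℝ)) atTop atTop := by
    refine tendsto_atTop_mono (fun n => ?_)
      (tendsto_natCast_atTop_atTop.atTop_div_const (mod_cast hL0 : (0 : ℝ) < L))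
    rw [div_le_iff₀' (mod_cast hL0)]
    exact_mod_cast hn_le n
  have hbound : Tendsto
      (fun n : ℕ => (A + L.multichoose (2 * k) / T n) * k.factorial * ((T n : ℝ) / n) ^ k) atTop
      (𝓝 (A * k.factorial / L ^ k)) := by
    have h := (((hT_top.const_div_atTop (L.multichoose (2 * k) : ℝ)).const_add A).mul_const
      (k.factorial : ℝ)).mul (hT.pow k)
    rwa [add_zero, inv_pow, ← div_eq_mul_inv] at h
  have hchoose := (tendsto_choose_mul_factorial_div_pow k).const_mul c
  rw [mul_one] at hchoose
  filter_upwards [hbound.eventually_lt hchoose hL, eventually_gt_atTop 0] with n hn hn0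
  rw [div_pow, ← mul_div_assoc, ← mul_div_assoc, div_lt_div_iff_of_pos_right (by positivity)] at hn
  refine (f_two_mul_le (hn_le n) k).trans (le_of_mul_le_mul_right ?_
    (mod_cast k.factorial_pos : (0 : ℝ) < k.factorial))
  linarith

end Asymptotics

end GrahamPollak

theorem f62_f63_product_bound_general (k : ℕ) {c : ℝ} (hc : (14 / 15 : ℝ) ^ (k / 2) < c) :
    ∀ᶠ n : ℕ in Filter.atTop,
      (f (2 * k) n : ℝ) * f (2 * k + 1) n ≤ c * (n.choose k : ℝ) ^ 2 := by
  filter_upwards [GrahamPollak.eventually_f_two_mul_le hc] with n heven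
  have hodd : f (2 * k + 1) n ≤ n.choose k := by
    simpa [Nat.mul_add_div two_pos] using GrahamPollak.f_le_choose (2 * k + 1) n
  calc (f (2 * k) n : ℝ) * f (2 * k + 1) n ≤ c * n.choose k * n.choose k :=
        mul_le_mul heven (mod_cast hodd) (Nat.cast_nonneg _) ((Nat.cast_nonneg _).trans heven)
    _ = c * (n.choose k : ℝ) ^ 2 := by ring

theorem f62_f63_product_bound (ε : ℝ) (hε : 0 < ε) :
    ∃ N : ℕ, ∀ n : ℕ, Even n → N ≤ n →
      2 * (f 62 (n / 2) : ℝ) * (f 63 (n / 2) : ℝ)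
        ≤ 0.981 * (1 + ε) * ((n / 2).choose 31 : ℝ) ^ 2 := by
  obtain ⟨N, hN⟩ := Filter.eventually_atTop.1
    (f62_f63_product_bound_general 31 (c := 0.4905) (by norm_num))
  refine ⟨2 * N, fun n _ hn => ?_⟩
  nlinarith [hN (n / 2) (by omega), mul_nonneg hε.le (sq_nonneg ((n / 2).choose 31 : ℝ))]
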